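/- Let 0 ≤ A < 1/3, let s* > 2 and 0 < d* < 2 satisfy F₂(s*, d*; A) = 0, and let c* > 0 satisfy F₁(s*, d*; c*) = 0 (equivalently c*² = (4 − d*²)²(s*² − 4)(3A·d* + s*)/(16(s*² − d*²))). Set r* = (1/4)√((s*² − 4)(4 − d*²)) > 0, x* = −A − d*·s*/4, and ω = c*/r*². Then for any θ₀ ∈ ℝ the curve γ(t) = (x*, r*·cos(ωt + θ₀), r*·sin(ωt + θ₀)) avoids the segment S = {(ξ,0,0) : −1−A ≤ ξ ≤ 1−A}, satisfies the equations of motion γ''(t) = −∇U(γ(t)) for all t ∈ ℝ, and is periodic with period T = 2π·r*²/c*; i.e., it is a circular orbit of the particle around the non-homogeneous segment. -/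

import Mathlib

/-- The scaled potential $U = 3Ad - \frac14(3Ads+4)\ln\frac{s+2}{s-2}$ of the
non-homogeneous segment, as a function on Euclidean $\mathbb{R}^3$, where
$s = R_1 + R_2$, $d = R_1 - R_2$ with $R_1, R_2$ the distances to the endpoints
$(1-A,0,0)$ and $(-1-A,0,0)$. -/
noncomputable def U (A : ℝ) (p : EuclideanSpace ℝ (Fin 3)) : ℝ :=
  let R₁ := Real.sqrt ((p 0 + A - 1) ^ 2 + (p 1) ^ 2 + (p 2) ^ 2)
  let R₂ := Real.sqrt ((p 0 + A + 1) ^ 2 + (p 1) ^ 2 + (p 2) ^ 2)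
  3 * A * (R₁ - R₂) -
    (1 / 4) * (3 * A * (R₁ - R₂) * (R₁ + R₂) + 4) *
      Real.log (((R₁ + R₂) + 2) / ((R₁ + R₂) - 2))

/-- $F_1(s,d;c) = (d^2-4)^2(s^2-4)(3Ad+s) + 16c^2(d^2-s^2)$. -/
noncomputable def F₁ (c A s d : ℝ) : ℝ :=
  (d ^ 2 - 4) ^ 2 * (s ^ 2 - 4) * (3 * A * d + s) + 16 * c ^ 2 * (d ^ 2 - s ^ 2)

/-- $F_2(s,d;A) = 3As + d + \frac34 A (d^2-s^2)\ln\frac{s+2}{s-2}$. -/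
noncomputable def F₂ (A s d : ℝ) : ℝ :=
  3 * A * s + d + (3 / 4) * A * (d ^ 2 - s ^ 2) * Real.log ((s + 2) / (s - 2))

lemma hasDerivAt_coords {f : ℝ → EuclideanSpace ℝ (Fin 3)} {f' : EuclideanSpace ℝ (Fin 3)} {t : ℝ}
    (h : ∀ i, HasDerivAt (fun x => f x i) (f' i) t) : HasDerivAt f f' t := by
  rw [hasDerivAt_iff_hasFDerivAt, ← hasFDerivWithinAt_univ, hasFDerivWithinAt_euclidean]
  intro i
  rw [hasFDerivWithinAt_univ]
  refine (h i).hasFDerivAt.congr_fderiv ?_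
  ext
  simp

lemma hasFDerivAt_dist (k R x y z : ℝ) (p : EuclideanSpace ℝ (Fin 3)) (hR : 0 < R)
    (h0 : p 0 + k = x) (h1 : p 1 = y) (h2 : p 2 = z) (h : x ^ 2 + y ^ 2 + z ^ 2 = R ^ 2) :
    HasFDerivAt (fun p : EuclideanSpace ℝ (Fin 3) =>
      Real.sqrt ((p 0 + k) ^ 2 + (p 1) ^ 2 + (p 2) ^ 2))
      ((1 / R) • (x • (EuclideanSpace.proj 0 : EuclideanSpace ℝ (Fin 3) →L[ℝ] ℝ)
        + y • (EuclideanSpace.proj 1 : EuclideanSpace ℝ (Fin 3) →L[ℝ] ℝ)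
        + z • (EuclideanSpace.proj 2 : EuclideanSpace ℝ (Fin 3) →L[ℝ] ℝ))) p := by
  have P (i : Fin 3) : HasFDerivAt (fun p : EuclideanSpace ℝ (Fin 3) => p i)
      (EuclideanSpace.proj i : EuclideanSpace ℝ (Fin 3) →L[ℝ] ℝ) p :=
    (EuclideanSpace.proj i : EuclideanSpace ℝ (Fin 3) →L[ℝ] ℝ).hasFDerivAt
  have hval : (p 0 + k) ^ 2 + (p 1) ^ 2 + (p 2) ^ 2 = R ^ 2 := by rw [h0, h1, h2, h]
  have H := (((((P 0).add_const k).pow 2).add ((P 1).pow 2)).add ((P 2).pow 2)).sqrt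
    (by
      simp only [Pi.add_apply]
      rw [hval]; positivity)
  refine H.congr_fderiv ?_
  ext v
  simp only [Pi.add_apply]
  rw [hval, Real.sqrt_sq hR.le]
  simp
  rw [← h0, h1, h2]
  field_simp

lemma hasFDerivAt_U (A s d x y z : ℝ) (p : EuclideanSpace ℝ (Fin 3)) (hs : 2 < s)
    (hd0 : 0 < d) (hd2 : d < 2)
    (h0 : p 0 = x) (h1 : p 1 = y) (h2 : p 2 = z)
    (hx : x = -A - d * s / 4) (hr : y ^ 2 + z ^ 2 = (s ^ 2 - 4) * (4 - d ^ 2) / 16)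
    (hF : F₂ A s d = 0) :
    HasFDerivAt (U A)
      ((16 * (s + 3 * A * d) / ((s ^ 2 - 4) * (s ^ 2 - d ^ 2))) •
       (y • (EuclideanSpace.proj 1 : EuclideanSpace ℝ (Fin 3) →L[ℝ] ℝ)
        + z • (EuclideanSpace.proj 2 : EuclideanSpace ℝ (Fin 3) →L[ℝ] ℝ))) p := by
  have hR1 : 0 < (s + d) / 2 := by linarith
  have hR2 : 0 < (s - d) / 2 := by linarith
  have e1 : (x + (A - 1)) ^ 2 + y ^ 2 + z ^ 2 = ((s + d) / 2) ^ 2 := by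
    subst hx; linear_combination hr
  have e2 : (x + (A + 1)) ^ 2 + y ^ 2 + z ^ 2 = ((s - d) / 2) ^ 2 := by
    subst hx; linear_combination hr
  have H1 := hasFDerivAt_dist (A - 1) _ (x + (A - 1)) y z p hR1 (by rw [h0]) h1 h2 e1
  have H2 := hasFDerivAt_dist (A + 1) _ (x + (A + 1)) y z p hR2 (by rw [h0]) h1 h2 e2
  have v1 : Real.sqrt ((p 0 + (A - 1)) ^ 2 + (p 1) ^ 2 + (p 2) ^ 2) = (s + d) / 2 := by
    rw [h0, h1, h2, e1, Real.sqrt_sq hR1.le]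
  have v2 : Real.sqrt ((p 0 + (A + 1)) ^ 2 + (p 1) ^ 2 + (p 2) ^ 2) = (s - d) / 2 := by
    rw [h0, h1, h2, e2, Real.sqrt_sq hR2.le]
  -- two-variable chain rule
  have key : ∀ (f g : EuclideanSpace ℝ (Fin 3) → ℝ) (f' g' : EuclideanSpace ℝ (Fin 3) →L[ℝ] ℝ),
      HasFDerivAt f f' p → HasFDerivAt g g' p → f p = (s + d) / 2 → g p = (s - d) / 2 →
      HasFDerivAt (fun q => 3 * A * (f q - g q) - (1 / 4) * (3 * A * (f q - g q) * (f q + g q) + 4) *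
        (Real.log ((f q + g q) + 2) - Real.log ((f q + g q) - 2)))
        ((-(3 / 4) * A * d * (Real.log (s + 2) - Real.log (s - 2))
          + (3 * A * d * s + 4) / (s ^ 2 - 4)) • (f' + g')
         + (3 * A - (3 / 4) * A * s * (Real.log (s + 2) - Real.log (s - 2))) • (f' - g')) p := by
    intro f g f' g' hf hg ef eg
    have es : f p + g p = s := by rw [ef, eg]; ring
    have ed : f p - g p = d := by rw [ef, eg]; ring
    have hS : HasFDerivAt (fun q => f q + g q) (f' + g') p := hf.add hg
    have hD : HasFDerivAt (fun q => f q - g q) (f' - g') p := hf.sub hg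
    have L1 : HasFDerivAt (fun q => Real.log ((f q + g q) + 2)) _ p :=
      (hS.add_const 2).log (by rw [es]; linarith)
    have L2 : HasFDerivAt (fun q => Real.log ((f q + g q) - 2)) _ p :=
      (hS.sub_const 2).log (by rw [es]; linarith)
    have M : HasFDerivAt (fun q => 3 * A * (f q - g q)) _ p := hD.const_mul (3 * A)
    have N : HasFDerivAt (fun q => (1 / 4) * (3 * A * (f q - g q) * (f q + g q) + 4)) _ p :=
      ((M.mul hS).add_const 4).const_mul (1 / 4)
    have T := M.sub (N.mul (L1.sub L2))
    refine T.congr_fderiv ?_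
    ext v
    simp only [Pi.sub_apply, es, ed]
    simp
    have n1 : s + 2 ≠ 0 := by linarith
    have n2 : s - 2 ≠ 0 := by linarith
    have n3 : s ^ 2 - 4 ≠ 0 := by
      have : s ^ 2 - 4 = (s + 2) * (s - 2) := by ring
      rw [this]; exact mul_ne_zero n1 n2
    rw [show s ^ 2 - 4 = (s + 2) * (s - 2) by ring]
    field_simp
    ring
  have K := key _ _ _ _ H1 H2 v1 v2
  have hUeq : U A =ᶠ[nhds p] (fun q => 3 * A * (Real.sqrt ((q 0 + (A - 1)) ^ 2 + (q 1) ^ 2 + (q 2) ^ 2)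
      - Real.sqrt ((q 0 + (A + 1)) ^ 2 + (q 1) ^ 2 + (q 2) ^ 2))
      - (1 / 4) * (3 * A * (Real.sqrt ((q 0 + (A - 1)) ^ 2 + (q 1) ^ 2 + (q 2) ^ 2)
      - Real.sqrt ((q 0 + (A + 1)) ^ 2 + (q 1) ^ 2 + (q 2) ^ 2))
      * (Real.sqrt ((q 0 + (A - 1)) ^ 2 + (q 1) ^ 2 + (q 2) ^ 2)
      + Real.sqrt ((q 0 + (A + 1)) ^ 2 + (q 1) ^ 2 + (q 2) ^ 2)) + 4) *
        (Real.log ((Real.sqrt ((q 0 + (A - 1)) ^ 2 + (q 1) ^ 2 + (q 2) ^ 2)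
      + Real.sqrt ((q 0 + (A + 1)) ^ 2 + (q 1) ^ 2 + (q 2) ^ 2)) + 2)
      - Real.log ((Real.sqrt ((q 0 + (A - 1)) ^ 2 + (q 1) ^ 2 + (q 2) ^ 2)
      + Real.sqrt ((q 0 + (A + 1)) ^ 2 + (q 1) ^ 2 + (q 2) ^ 2)) - 2))) := by
    have hc := (H1.add H2).continuousAt
    have hm : ∀ᶠ q in nhds p, 2 < Real.sqrt ((q 0 + (A - 1)) ^ 2 + (q 1) ^ 2 + (q 2) ^ 2)
        + Real.sqrt ((q 0 + (A + 1)) ^ 2 + (q 1) ^ 2 + (q 2) ^ 2) := by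
      refine hc.eventually_const_lt ?_
      simp only [Pi.add_apply]
      rw [v1, v2]; linarith
    filter_upwards [hm] with q hq
    simp only [U]
    rw [← Real.log_div (by linarith) (by linarith)]
    simp only [add_sub_assoc, add_assoc]
  refine (K.congr_of_eventuallyEq hUeq).congr_fderiv ?_
  have n1 : s + 2 ≠ 0 := by linarith
  have n2 : s - 2 ≠ 0 := by linarith
  have n3 : s + d ≠ 0 := by linarith
  have n4 : s - d ≠ 0 := by linarith
  simp only [F₂] at hF
  rw [Real.log_div n1 n2] at hF
  ext v
  simp
  generalize Real.log (s + 2) - Real.log (s - 2) = L at *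
  rw [show s ^ 2 - 4 = (s + 2) * (s - 2) by ring, show s ^ 2 - d ^ 2 = (s + d) * (s - d) by ring]
  subst hx
  have E1 : (-(3 / 4) * A * d * L + (3 * A * d * s + 4) / ((s + 2) * (s - 2))) *
        (((s + d) / 2)⁻¹ + ((s - d) / 2)⁻¹)
      + (3 * A - 3 / 4 * A * s * L) * (((s + d) / 2)⁻¹ - ((s - d) / 2)⁻¹)
      = 16 * (s + 3 * A * d) / ((s + 2) * (s - 2) * ((s + d) * (s - d))) := by
    field_simp
    ring
  have E0 : (-(3 / 4) * A * d * L + (3 * A * d * s + 4) / ((s + 2) * (s - 2))) *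
        (((s + d) / 2)⁻¹ * (-(d * s / 4) - 1) + ((s - d) / 2)⁻¹ * (-(d * s / 4) + 1))
      + (3 * A - 3 / 4 * A * s * L) *
        (((s + d) / 2)⁻¹ * (-(d * s / 4) - 1) - ((s - d) / 2)⁻¹ * (-(d * s / 4) + 1)) = 0 := by
    field_simp
    linear_combination (-64 * (s + 2) * (s - 2)) * hF
  simp only [inv_div] at E0 E1
  linear_combination (v 0) * E0 + (y * v 1 + z * v 2) * E1

/-- Circular orbit: for $0 \le A < 1/3$, $s^* > 2$, $0 < d^* < 2$ with
$F_2(s^*,d^*;A) = 0$, and $c^* > 0$ with $F_1(s^*,d^*;c^*) = 0$, set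
$r^* = \frac14\sqrt{(s^{*2}-4)(4-d^{*2})}$, $x^* = -A - d^*s^*/4$,
$\omega = c^*/r^{*2}$.  Then for any phase $\theta_0$ the curve
$\gamma(t) = (x^*, r^*\cos(\omega t+\theta_0), r^*\sin(\omega t+\theta_0))$ avoids the
segment $S = \{(\xi,0,0) : -1-A \le \xi \le 1-A\}$, satisfies
$\gamma'' = -\nabla U(\gamma)$, and is periodic with period $T = 2\pi r^{*2}/c^*$. -/
theorem circular_orbit (A : ℝ) (hA0 : 0 ≤ A) (hA : A < 1 / 3)
    (sstar dstar cstar : ℝ) (hs : 2 < sstar) (hd0 : 0 < dstar) (hd2 : dstar < 2)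
    (hF₂ : F₂ A sstar dstar = 0) (hc : 0 < cstar) (hF₁ : F₁ cstar A sstar dstar = 0)
    (rstar xstar ω T : ℝ)
    (hr : rstar = (1 / 4) * Real.sqrt ((sstar ^ 2 - 4) * (4 - dstar ^ 2)))
    (hx : xstar = -A - dstar * sstar / 4)
    (hω : ω = cstar / rstar ^ 2)
    (hT : T = 2 * Real.pi * rstar ^ 2 / cstar)
    (θ₀ : ℝ) (γ : ℝ → EuclideanSpace ℝ (Fin 3))
    (hγ : ∀ t : ℝ, γ t = (WithLp.equiv 2 (Fin 3 → ℝ)).symm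
      ![xstar, rstar * Real.cos (ω * t + θ₀), rstar * Real.sin (ω * t + θ₀)]) :
    0 < rstar ∧
    (∀ t : ℝ, ¬ ((γ t) 1 = 0 ∧ (γ t) 2 = 0 ∧ -1 - A ≤ (γ t) 0 ∧ (γ t) 0 ≤ 1 - A)) ∧
    (∀ t : ℝ, deriv (deriv γ) t = -gradient (U A) (γ t)) ∧
    (∀ t : ℝ, γ (t + T) = γ t) := by
  have hs4 : 0 < sstar ^ 2 - 4 := by nlinarith
  have hd4 : 0 < 4 - dstar ^ 2 := by nlinarith
  have hsd : 0 < sstar ^ 2 - dstar ^ 2 := by nlinarith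
  have hrpos : 0 < rstar := by rw [hr]; positivity
  have hr2 : rstar ^ 2 = (sstar ^ 2 - 4) * (4 - dstar ^ 2) / 16 := by
    rw [hr, mul_pow, Real.sq_sqrt (by positivity)]; ring
  have g0 (t : ℝ) : γ t 0 = xstar := by rw [hγ]; simp
  have g1 (t : ℝ) : γ t 1 = rstar * Real.cos (ω * t + θ₀) := by rw [hγ]; simp
  have g2 (t : ℝ) : γ t 2 = rstar * Real.sin (ω * t + θ₀) := by rw [hγ]; simp
  refine ⟨hrpos, ?_, ?_, ?_⟩
  · rintro t ⟨h1, h2, -, -⟩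
    rw [g1] at h1
    rw [g2] at h2
    have := Real.sin_sq_add_cos_sq (ω * t + θ₀)
    have c0 := (mul_eq_zero.1 h1).resolve_left hrpos.ne'
    have s0 := (mul_eq_zero.1 h2).resolve_left hrpos.ne'
    rw [c0, s0] at this
    norm_num at this
  · intro t
    have hω2 : ω ^ 2 = 16 * (sstar + 3 * A * dstar) /
        ((sstar ^ 2 - 4) * (sstar ^ 2 - dstar ^ 2)) := by
      rw [hω, div_pow, hr2, div_pow, mul_pow]
      simp only [F₁] at hF₁
      field_simp
      linear_combination (-1) * hF₁
    have hG : gradient (U A) (γ t) = WithLp.toLp 2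
        ![0, ω ^ 2 * (rstar * Real.cos (ω * t + θ₀)), ω ^ 2 * (rstar * Real.sin (ω * t + θ₀))] := by
      have := hasFDerivAt_U A sstar dstar _ _ _ (γ t) hs hd0 hd2 (g0 t) (g1 t) (g2 t) hx
        (by rw [← hr2]; linear_combination rstar ^ 2 * Real.sin_sq_add_cos_sq (ω * t + θ₀)) hF₂
      refine HasGradientAt.gradient ?_
      rw [hasGradientAt_iff_hasFDerivAt]
      refine this.congr_fderiv ?_
      rw [← hω2]
      ext v
      simp [PiLp.inner_apply, Fin.sum_univ_three]
      ring
    have hlin (t : ℝ) : HasDerivAt (fun t => ω * t + θ₀) ω t := by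
      simpa using ((hasDerivAt_id t).const_mul ω).add_const θ₀
    have hd1 : deriv γ = fun t => WithLp.toLp 2
        ![0, rstar * (-Real.sin (ω * t + θ₀) * ω), rstar * (Real.cos (ω * t + θ₀) * ω)] := by
      funext t
      refine HasDerivAt.deriv ?_
      refine hasDerivAt_coords ?_
      intro i
      fin_cases i
      · simp only [Fin.zero_eta, g0]
        simpa using hasDerivAt_const t xstar
      · simp only [Fin.mk_one, g1]
        simpa using ((hlin t).cos.const_mul rstar)
      · simp only [Fin.reduceFinMk, g2]
        simpa using ((hlin t).sin.const_mul rstar)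
    rw [hG, hd1]
    refine HasDerivAt.deriv ?_
    refine hasDerivAt_coords ?_
    intro i
    fin_cases i
    · simpa using hasDerivAt_const t (0 : ℝ)
    · have : HasDerivAt (fun t => rstar * (-Real.sin (ω * t + θ₀) * ω)) _ t :=
        (((hlin t).sin.neg.mul_const ω).const_mul rstar)
      refine HasDerivAt.congr_deriv this ?_
      simp
      ring
    · have : HasDerivAt (fun t => rstar * (Real.cos (ω * t + θ₀) * ω)) _ t :=
        (((hlin t).cos.mul_const ω).const_mul rstar)
      refine HasDerivAt.congr_deriv this ?_
      simp
      ring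
  · intro t
    have hωT : ω * (t + T) + θ₀ = ω * t + θ₀ + 2 * Real.pi := by
      rw [hω, hT]; field_simp; ring
    rw [hγ, hγ, hωT, Real.cos_add_two_pi, Real.sin_add_two_pi]
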